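/- Let J ⊆ I be two monomial ideals in a polynomial ring S over a field K, where I is generated in degree d by monomials m_1, …, m_k. Then reg(J) ≤ max{ max_{1 ≤ i ≤ k} ( reg( (J : m_i) + (m_1 : m_i) + ⋯ + (m_{i−1} : m_i) ) + d ), reg(I) }. -/

import Mathlib

open MvPolynomial

/-! Graph-theoretic definitions -/

/-- A list of vertices is a path in `G`: consecutive vertices are adjacent and all
vertices are distinct. -/
def SimpleGraph.IsPathList {V : Type*} (G : SimpleGraph V) (l : List V) : Prop :=
  l.Chain' G.Adj ∧ l.Nodup

/-- The `t`-path ideal of a graph: the ideal generated by the monomials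
`x_{v_1} ⋯ x_{v_t}` where `v_1 ⋯ v_t` is a path on `t` distinct vertices of `G`. -/
noncomputable def pathIdeal {V K : Type*} [CommRing K] (G : SimpleGraph V) (t : ℕ) :
    Ideal (MvPolynomial V K) :=
  Ideal.span { p | ∃ l : List V, G.IsPathList l ∧ l.length = t ∧ p = (l.map X).prod }

/-- The edge ideal of a graph. -/
noncomputable def edgeIdeal {V K : Type*} [CommRing K] (G : SimpleGraph V) :
    Ideal (MvPolynomial V K) :=
  Ideal.span { p | ∃ u v, G.Adj u v ∧ p = X u * X v }

/-- `G` is gap-free: any two vertex-disjoint edges are joined by an edge. -/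
def SimpleGraph.GapFree {V : Type*} (G : SimpleGraph V) : Prop :=
  ∀ a b c d : V, G.Adj a b → G.Adj c d → a ≠ c → a ≠ d → b ≠ c → b ≠ d →
    (G.Adj a c ∨ G.Adj a d ∨ G.Adj b c ∨ G.Adj b d)

/-- `G` is claw-free: it has no induced `K_{1,3}`. -/
def SimpleGraph.ClawFree {V : Type*} (G : SimpleGraph V) : Prop :=
  ∀ v a b c : V, G.Adj v a → G.Adj v b → G.Adj v c → a ≠ b → a ≠ c → b ≠ c →
    (G.Adj a b ∨ G.Adj a c ∨ G.Adj b c)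

/-- `G` is cricket-free: it has no induced cricket. -/
def SimpleGraph.CricketFree {V : Type*} (G : SimpleGraph V) : Prop :=
  ¬ ∃ w1 w2 w3 w4 w5 : V,
      w1 ≠ w2 ∧ w1 ≠ w3 ∧ w1 ≠ w4 ∧ w1 ≠ w5 ∧ w2 ≠ w3 ∧ w2 ≠ w4 ∧ w2 ≠ w5 ∧
      w3 ≠ w4 ∧ w3 ≠ w5 ∧ w4 ≠ w5 ∧
      G.Adj w1 w3 ∧ G.Adj w2 w3 ∧ G.Adj w3 w4 ∧ G.Adj w3 w5 ∧ G.Adj w4 w5 ∧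
      ¬ G.Adj w1 w2 ∧ ¬ G.Adj w1 w4 ∧ ¬ G.Adj w1 w5 ∧ ¬ G.Adj w2 w4 ∧ ¬ G.Adj w2 w5

/-- `w : Fin n → V` is an induced cycle of length `n` in `H`. -/
def SimpleGraph.IsInducedCycle {V : Type*} (H : SimpleGraph V) {n : ℕ} (w : Fin n → V) :
    Prop :=
  3 ≤ n ∧ Function.Injective w ∧
    ∀ i j : Fin n, H.Adj (w i) (w j) ↔
      ((j : ℕ) = ((i : ℕ) + 1) % n ∨ (i : ℕ) = ((j : ℕ) + 1) % n)

/-- A graph is chordal if it has no induced cycle of length at least four. -/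
def SimpleGraph.Chordal {V : Type*} (H : SimpleGraph V) : Prop :=
  ∀ (n : ℕ), 4 ≤ n → ∀ w : Fin n → V, ¬ H.IsInducedCycle w

/-! Monomial ideals, graded Betti numbers via the Taylor complex, and
Castelnuovo–Mumford regularity. -/

/-- The monomial ideal generated by the monomials with exponent vectors `gens`. -/
noncomputable def monomialSpan {V K : Type*} [CommRing K] {k : ℕ}
    (gens : Fin k → (V →₀ ℕ)) : Ideal (MvPolynomial V K) :=
  Ideal.span (Set.range fun i => monomial (gens i) (1 : K))

/-- The total degree of an exponent vector. -/
def monomialDegree {V : Type*} (m : V →₀ ℕ) : ℕ := m.sum fun _ n => n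

/-- `m` is a minimal monomial generator of the monomial ideal `I`. -/
def IsMinimalMonomialGen {V K : Type*} [CommRing K] (I : Ideal (MvPolynomial V K))
    (m : V →₀ ℕ) : Prop :=
  monomial m (1 : K) ∈ I ∧ ∀ m' : V →₀ ℕ, m' ≤ m → m' ≠ m → monomial m' (1 : K) ∉ I

/-- The lcm of the monomials `gens i`, `i ∈ T`. -/
noncomputable def taylorLcm {V : Type*} {k : ℕ} (gens : Fin k → (V →₀ ℕ))
    (T : Finset (Fin k)) : V →₀ ℕ :=
  T.sup gens

open Classical in
/-- The boundary of a basis element of the Taylor complex of `gens`, tensored with the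
residue field `K`: only the terms where the lcm is unchanged survive. -/
noncomputable def taylorBoundary {V K : Type*} [Field K] {k : ℕ}
    (gens : Fin k → (V →₀ ℕ)) (T : Finset (Fin k)) : Finset (Fin k) →₀ K :=
  ∑ t ∈ T, if taylorLcm gens (T.erase t) = taylorLcm gens T then
      ((-1 : K) ^ (T.filter fun s => s < t).card) • Finsupp.single (T.erase t) (1 : K)
    else 0

/-- The differential of the Taylor complex of `gens` tensored with `K`. -/
noncomputable def taylorDiff {V K : Type*} [Field K] {k : ℕ}
    (gens : Fin k → (V →₀ ℕ)) : (Finset (Fin k) →₀ K) →ₗ[K] (Finset (Fin k) →₀ K) :=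
  Finsupp.lsum K fun T =>
    LinearMap.toSpanSingleton K (Finset (Fin k) →₀ K) (taylorBoundary gens T)

/-- The graded piece of the Taylor complex in homological degree `i` and internal
degree `j`. -/
noncomputable def taylorPiece {V K : Type*} [Field K] {k : ℕ}
    (gens : Fin k → (V →₀ ℕ)) (i j : ℕ) : Submodule K (Finset (Fin k) →₀ K) :=
  Submodule.span K { f | ∃ T : Finset (Fin k), T.card = i ∧
    monomialDegree (taylorLcm gens T) = j ∧ f = Finsupp.single T (1 : K) }

/-- Nonvanishing of the degree-`j` part of the `i`-th homology of the Taylor complex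
of `gens` tensored with `K`; since the Taylor complex is a graded free resolution of
`S/I` (where `I` is the ideal generated by the monomials `gens`), this says exactly
that `Tor_i^S(S/I, K)_j ≠ 0`. -/
noncomputable def taylorHomologyNonzero {V K : Type*} [Field K] {k : ℕ}
    (gens : Fin k → (V →₀ ℕ)) (i j : ℕ) : Prop :=
  ¬ (LinearMap.ker (taylorDiff (K := K) gens) ⊓ taylorPiece (K := K) gens i j ≤
      Submodule.map (taylorDiff (K := K) gens) (taylorPiece (K := K) gens (i + 1) j))

/-- For a monomial ideal `I`, `Tor_i^S(I, K)_j ≠ 0`.  (Since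
`Tor_i^S(I,K) ≅ Tor_{i+1}^S(S/I,K)`, this is computed from the Taylor complex on any
family of monomial generators of `I`.) -/
def IdealTorNonzero {V K : Type*} [Field K] (I : Ideal (MvPolynomial V K))
    (i j : ℕ) : Prop :=
  ∃ (k : ℕ) (gens : Fin k → (V →₀ ℕ)), I = monomialSpan gens ∧
    taylorHomologyNonzero (K := K) gens (i + 1) j

/-- The Castelnuovo–Mumford regularity of a monomial ideal `I`:
`reg I = max { j - i : Tor_i^S(I, K)_j ≠ 0 }`. -/
noncomputable def reg {V K : Type*} [Field K] (I : Ideal (MvPolynomial V K)) : ℕ :=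
  sSup { d | ∃ i j : ℕ, IdealTorNonzero I i j ∧ d = j - i }

/-! For a monomial `n`, the Taylor complex on generators of `J` together with `n` contains the
Taylor complex on the generators of `J` as the faces avoiding the vertex `n` (the deletion), and
the quotient by it, spanned by the faces through `n` (the link), is the Taylor complex of `J : n`
up to a shift by one in homological degree and by `deg n` in internal degree. The long exact
sequence `Tor_i(J : n)_{j - deg n} → Tor_i(J)_j → Tor_i(J + (n))_j` gives `reg J ≤ max (reg (J : n)
+ deg n, reg (J + (n)))`, and the theorem follows by adding `m_1, …, m_k` to `J` one at a time.

As `reg` is a supremum of natural numbers, `j - i ≤ reg I` for `Tor_i(I)_j ≠ 0` also needs a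
bound uniform over all generating families of `I`. The same sequence allows redundant generators
to be removed, after which `j` is at most the degree of the lcm of any one fixed generating
family. -/

section Sign

variable {ι κ R : Type*} [LinearOrder ι] [LinearOrder κ] [Ring R]

/-- The sign `(-1) ^ #{s ∈ S | s < t}` with which the face `S` occurs in the boundary of
`insert t S`, for `t ∉ S`. -/
def incidenceSign (R : Type*) [Ring R] (t : ι) (S : Finset ι) : R :=
  (-1) ^ (S.filter fun s => s < t).card

lemma incidenceSign_mul_self (t : ι) (S : Finset ι) :
    incidenceSign R t S * incidenceSign R t S = 1 := by
  rw [incidenceSign, ← pow_add, ← two_mul, pow_mul, neg_one_sq, one_pow]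

lemma incidenceSign_ne_zero [Nontrivial R] (t : ι) (S : Finset ι) : incidenceSign R t S ≠ 0 :=
  left_ne_zero_of_mul_eq_one (incidenceSign_mul_self t S)

lemma incidenceSign_insert (t : ι) {s : ι} {S : Finset ι} (hs : s ∉ S) :
    incidenceSign R t (insert s S) =
      if s < t then -incidenceSign R t S else incidenceSign R t S := by
  unfold incidenceSign
  split_ifs with h
  · rw [Finset.filter_insert, if_pos h, Finset.card_insert_of_notMem (by simp [hs]), pow_succ,
      mul_neg_one]
  · rw [Finset.filter_insert, if_neg h]

lemma incidenceSign_erase_self (t : ι) (S : Finset ι) :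
    incidenceSign R t (S.erase t) = incidenceSign R t S := by
  rw [incidenceSign, Finset.filter_erase, Finset.erase_eq_of_notMem (by simp), incidenceSign]

lemma incidenceSign_map (e : ι ↪o κ) (t : ι) (S : Finset ι) :
    incidenceSign R (e t) (S.map e.toEmbedding) = incidenceSign R t S := by
  simp [incidenceSign, Finset.filter_map]

lemma incidenceSign_mul_insert_swap {s t : ι} {S : Finset ι} (hs : s ∉ S) (ht : t ∉ S)
    (hst : s ≠ t) :
    incidenceSign R t S * incidenceSign R s (insert t S) =
      -(incidenceSign R s S * incidenceSign R t (insert s S)) := by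
  have hcomm : Commute (incidenceSign R t S) (incidenceSign R s S) :=
    ((Commute.refl (-1 : R)).pow_pow _ _)
  rw [incidenceSign_insert s ht, incidenceSign_insert t hs]
  rcases hst.lt_or_gt with h | h
  · simp [h, h.not_gt, hcomm.eq]
  · simp [h, h.not_gt, hcomm.eq]

end Sign

section TaylorComplex

variable {V R K : Type*} [Ring R] [Field K] {k : ℕ} (g : Fin k → (V →₀ ℕ))

open Classical in
/-- The coefficient of the face `S` in the boundary of `insert t S`, for `t ∉ S`, in the Taylor
complex of `g` modulo the variables, with coefficients in `R`. -/
noncomputable def taylorIncidence (R : Type*) [Ring R] (t : Fin k) (S : Finset (Fin k)) : R :=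
  if taylorLcm g S = taylorLcm g (insert t S) then incidenceSign R t S else 0

lemma taylorBoundary_apply (T S : Finset (Fin k)) :
    taylorBoundary (K := K) g T S =
      ∑ t ∈ Sᶜ, taylorIncidence g K t S * Finsupp.single T 1 (insert t S) := by
  classical
  simp only [taylorBoundary, Finsupp.finsetSum_apply]
  rw [← Fintype.sum_ite_mem T, ← Fintype.sum_ite_mem Sᶜ]
  refine Finset.sum_congr rfl fun t _ => ?_
  by_cases h : t ∈ T ∧ T.erase t = S
  · obtain ⟨ht, rfl⟩ := h
    have ht' : t ∈ (T.erase t)ᶜ := by simp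
    rw [if_pos ht, if_pos ht', Finset.insert_erase ht, Finsupp.single_eq_same, mul_one,
      taylorIncidence, Finset.insert_erase ht, incidenceSign_erase_self]
    split_ifs <;> simp [incidenceSign]
  · have h' : ¬ (t ∉ S ∧ insert t S = T) := fun ⟨ht, hT⟩ =>
      h (by simp [← hT, Finset.erase_insert ht])
    trans 0
    · split_ifs <;> simp_all
    · split_ifs <;> simp_all [eq_comm]

lemma taylorDiff_apply (f : Finset (Fin k) →₀ K) (S : Finset (Fin k)) :
    taylorDiff g f S = ∑ t ∈ Sᶜ, taylorIncidence g K t S * f (insert t S) := by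
  induction f using Finsupp.induction_linear with
  | zero => simp
  | add f₁ f₂ h₁ h₂ => simp only [map_add, Finsupp.add_apply, h₁, h₂, mul_add,
      Finset.sum_add_distrib]
  | single T c =>
    rw [← mul_one c, ← smul_eq_mul, ← Finsupp.smul_single, map_smul]
    simp only [Finsupp.smul_apply, smul_eq_mul, mul_left_comm _ c, ← Finset.mul_sum,
      ← taylorBoundary_apply]
    simp [taylorDiff]

lemma taylorLcm_mono {S T : Finset (Fin k)} (h : S ⊆ T) : taylorLcm g S ≤ taylorLcm g T :=
  Finset.sup_mono h

lemma taylorLcm_insert (t : Fin k) (S : Finset (Fin k)) :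
    taylorLcm g (insert t S) = g t ⊔ taylorLcm g S :=
  Finset.sup_insert

lemma taylorIncidence_mul_insert_swap {s t : Fin k} {S : Finset (Fin k)} (hs : s ∉ S)
    (ht : t ∉ S) (hst : s ≠ t) :
    taylorIncidence g R t S * taylorIncidence g R s (insert t S) =
      -(taylorIncidence g R s S * taylorIncidence g R t (insert s S)) := by
  classical
  have incidence_mul (a b : Fin k) : taylorIncidence g R a S * taylorIncidence g R b (insert a S) =
      if taylorLcm g S = taylorLcm g (insert b (insert a S)) then
        incidenceSign R a S * incidenceSign R b (insert a S) else 0 := by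
    have h₁ := taylorLcm_mono g (Finset.subset_insert a S)
    have h₂ := taylorLcm_mono g (Finset.subset_insert b (insert a S))
    unfold taylorIncidence
    grind
  rw [incidence_mul, incidence_mul, Finset.insert_comm, incidenceSign_mul_insert_swap hs ht hst]
  split_ifs <;> simp

lemma taylorDiff_taylorDiff (f : Finset (Fin k) →₀ K) : taylorDiff g (taylorDiff g f) = 0 := by
  ext S
  simp only [taylorDiff_apply, Finset.mul_sum, Finset.sum_sigma', Finsupp.coe_zero, Pi.zero_apply]
  refine Finset.sum_involution (fun x _ => ⟨x.2, x.1⟩) ?_ ?_ ?_ fun _ _ => rfl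
  · rintro ⟨t, s⟩ h
    obtain ⟨ht, hst, hs⟩ : t ∉ S ∧ s ≠ t ∧ s ∉ S := by simpa using h
    rw [← mul_assoc, ← mul_assoc, taylorIncidence_mul_insert_swap g hs ht hst,
      Finset.insert_comm s t, neg_mul, neg_add_cancel]
  · rintro ⟨t, s⟩ h _ heq
    simp_all
  · rintro ⟨t, s⟩ h
    simp_all [eq_comm]

lemma mem_taylorPiece_iff {i j : ℕ} {f : Finset (Fin k) →₀ K} :
    f ∈ taylorPiece g i j ↔
      ∀ T, f T ≠ 0 → T.card = i ∧ monomialDegree (taylorLcm g T) = j := by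
  have hgen : {f : Finset (Fin k) →₀ K | ∃ T : Finset (Fin k), T.card = i ∧
      monomialDegree (taylorLcm g T) = j ∧ f = Finsupp.single T 1} =
      (Finsupp.single · 1) '' {T | T.card = i ∧ monomialDegree (taylorLcm g T) = j} := by
    ext f
    simp [and_assoc, eq_comm]
  rw [taylorPiece, hgen, ← Finsupp.supported_eq_span_single, Finsupp.mem_supported]
  simp [Set.subset_def]

lemma taylorDiff_mem_taylorPiece {i j : ℕ} {f : Finset (Fin k) →₀ K}
    (hf : f ∈ taylorPiece g (i + 1) j) : taylorDiff g f ∈ taylorPiece g i j := by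
  rw [mem_taylorPiece_iff] at hf ⊢
  intro S hS
  rw [taylorDiff_apply] at hS
  obtain ⟨t, ht, hne⟩ := Finset.exists_ne_zero_of_sum_ne_zero hS
  obtain ⟨hcard, hdeg⟩ := hf _ (right_ne_zero_of_mul hne)
  have hlcm : taylorLcm g S = taylorLcm g (insert t S) := by
    by_contra h
    exact left_ne_zero_of_mul hne (if_neg h)
  rw [Finset.card_insert_of_notMem (Finset.mem_compl.mp ht)] at hcard
  exact ⟨Nat.succ_injective hcard, hlcm ▸ hdeg⟩

lemma not_taylorHomologyNonzero_iff {i j : ℕ} :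
    ¬ taylorHomologyNonzero (K := K) g i j ↔ ∀ f ∈ taylorPiece (K := K) g i j,
      taylorDiff g f = 0 → ∃ u ∈ taylorPiece g (i + 1) j, taylorDiff g u = f := by
  simp only [taylorHomologyNonzero, not_not, SetLike.le_def, Submodule.mem_inf, LinearMap.mem_ker,
    Submodule.mem_map, and_imp]
  exact forall_congr' fun f => forall_comm

end TaylorComplex

section DeletionLink

variable {V R K : Type*} [CommRing R] [Field K] {k : ℕ}

/-- The exponent vectors `g t - n` of the generators `lcm (x ^ g t, x ^ n) / x ^ n` of the colon
ideal by `x ^ n` of the monomial ideal generated by the family `g`. -/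
noncomputable def colonGens (g : Fin k → (V →₀ ℕ)) (n : V →₀ ℕ) : Fin k → (V →₀ ℕ) :=
  fun t => g t - n

lemma forall_finset_fin_succ_iff (p : Fin (k + 1)) {P : Finset (Fin (k + 1)) → Prop} :
    (∀ T, P T) ↔ (∀ S : Finset (Fin k), P (S.map p.succAboveEmb)) ∧
      ∀ S : Finset (Fin k), P (insert p (S.map p.succAboveEmb)) := by
  refine ⟨fun h => ⟨fun S => h _, fun S => h _⟩, fun ⟨h₁, h₂⟩ T => ?_⟩
  have hmap : (T.preimage p.succAbove p.succAbove_right_injective.injOn).map p.succAboveEmb =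
      T.erase p := by
    ext t
    induction t using p.succAboveCases <;> simp [p.succAbove_ne]
  by_cases hp : p ∈ T
  · rw [← Finset.insert_erase hp, ← hmap]
    exact h₂ _
  · rw [← Finset.erase_eq_of_notMem hp, ← hmap]
    exact h₁ _

lemma notMem_map_succAboveEmb (p : Fin (k + 1)) (S : Finset (Fin k)) :
    p ∉ S.map p.succAboveEmb := by
  simp [p.succAbove_ne]

lemma compl_map_succAboveEmb (p : Fin (k + 1)) (S : Finset (Fin k)) :
    (S.map p.succAboveEmb)ᶜ = insert p (Sᶜ.map p.succAboveEmb) := by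
  ext t
  induction t using p.succAboveCases <;> simp [p.succAbove_ne]

lemma compl_insert_map_succAboveEmb (p : Fin (k + 1)) (S : Finset (Fin k)) :
    (insert p (S.map p.succAboveEmb))ᶜ = Sᶜ.map p.succAboveEmb := by
  ext t
  induction t using p.succAboveCases <;> simp [p.succAbove_ne]

lemma map_succAboveEmb_insert (p : Fin (k + 1)) (t : Fin k) (S : Finset (Fin k)) :
    (insert t S).map p.succAboveEmb = insert (p.succAbove t) (S.map p.succAboveEmb) :=
  Finset.map_insert _ _ _

/-- Restriction of a chain on `Fin (k + 1)` to the faces that avoid the vertex `p`, reindexed by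
`Fin k` (the deletion of `p`). -/
noncomputable def chainDeletion (R : Type*) [CommRing R] (p : Fin (k + 1)) :
    (Finset (Fin (k + 1)) →₀ R) →ₗ[R] (Finset (Fin k) →₀ R) :=
  Finsupp.lcomapDomain (Finset.map p.succAboveEmb) (Finset.map_injective _)

/-- Restriction of a chain on `Fin (k + 1)` to the faces through the vertex `p`, with `p` then
removed and the rest reindexed by `Fin k` (the link of `p`). The sign makes this map anticommute
with the boundaries. -/
noncomputable def chainLink (R : Type*) [CommRing R] (p : Fin (k + 1)) :
    (Finset (Fin (k + 1)) →₀ R) →ₗ[R] (Finset (Fin k) →₀ R) :=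
  (Finsupp.linearEquivFunOnFinite R R _).symm.toLinearMap ∘ₗ LinearMap.pi fun S =>
    incidenceSign R p (S.map p.succAboveEmb) • Finsupp.lapply (insert p (S.map p.succAboveEmb))

variable (p : Fin (k + 1)) (g : Fin (k + 1) → (V →₀ ℕ))

lemma chainDeletion_apply (u : Finset (Fin (k + 1)) →₀ R) (S : Finset (Fin k)) :
    chainDeletion R p u S = u (S.map p.succAboveEmb) := rfl

lemma chainLink_apply (u : Finset (Fin (k + 1)) →₀ R) (S : Finset (Fin k)) :
    chainLink R p u S =
      incidenceSign R p (S.map p.succAboveEmb) * u (insert p (S.map p.succAboveEmb)) := rfl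

lemma chain_ext {u v : Finset (Fin (k + 1)) →₀ R}
    (hdel : chainDeletion R p u = chainDeletion R p v)
    (hlink : chainLink R p u = chainLink R p v) : u = v := by
  refine Finsupp.ext ((forall_finset_fin_succ_iff p).mpr ⟨DFunLike.congr_fun hdel, fun S => ?_⟩)
  have hS := DFunLike.congr_fun hlink S
  rwa [chainLink_apply, chainLink_apply,
    (IsUnit.of_mul_eq_one _ (incidenceSign_mul_self _ _)).mul_right_inj] at hS

lemma exists_chainDeletion_eq_chainLink_eq (a b : Finset (Fin k) →₀ R) :
    ∃ u, chainDeletion R p u = a ∧ chainLink R p u = b := by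
  classical
  let preim (T : Finset (Fin (k + 1))) : Finset (Fin k) :=
    T.preimage p.succAbove p.succAbove_right_injective.injOn
  have hmap (S : Finset (Fin k)) : preim (S.map p.succAboveEmb) = S := by ext; simp [preim]
  have hinsert (S : Finset (Fin k)) : preim (insert p (S.map p.succAboveEmb)) = S := by
    ext; simp [preim, p.succAbove_ne]
  refine ⟨Finsupp.equivFunOnFinite.symm fun T =>
    if p ∈ T then incidenceSign R p T * b (preim T) else a (preim T), ?_, ?_⟩
  · ext S
    simp [chainDeletion_apply, p.succAbove_ne, hmap]
  · ext S
    simp [chainLink_apply, hinsert, incidenceSign_insert p (notMem_map_succAboveEmb p S),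
      ← mul_assoc, incidenceSign_mul_self]

lemma taylorLcm_map_succAboveEmb (S : Finset (Fin k)) :
    taylorLcm g (S.map p.succAboveEmb) = taylorLcm (p.removeNth g) S :=
  Finset.sup_map _ _ _

lemma taylorLcm_colonGens_add {k : ℕ} (g : Fin k → (V →₀ ℕ)) (n : V →₀ ℕ) (S : Finset (Fin k)) :
    taylorLcm (colonGens g n) S + n = n ⊔ taylorLcm g S := by
  induction S using Finset.induction_on with
  | empty => simp [taylorLcm, bot_eq_zero]
  | insert t S _ ih =>
    rw [taylorLcm_insert, taylorLcm_insert, sup_left_comm, ← ih]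
    ext v
    simp only [colonGens, Finsupp.add_apply, Finsupp.sup_apply, Finsupp.tsub_apply]
    omega

lemma taylorLcm_insert_map_succAboveEmb (S : Finset (Fin k)) :
    taylorLcm g (insert p (S.map p.succAboveEmb)) =
      taylorLcm (colonGens (p.removeNth g) (g p)) S + g p := by
  rw [taylorLcm_insert, taylorLcm_map_succAboveEmb, taylorLcm_colonGens_add]

lemma taylorIncidence_map_succAboveEmb (t : Fin k) (S : Finset (Fin k)) :
    taylorIncidence g R (p.succAbove t) (S.map p.succAboveEmb) =
      taylorIncidence (p.removeNth g) R t S := by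
  classical
  rw [taylorIncidence, taylorIncidence, ← map_succAboveEmb_insert, taylorLcm_map_succAboveEmb,
    taylorLcm_map_succAboveEmb]
  exact if_congr Iff.rfl (incidenceSign_map p.succAboveOrderEmb t S) rfl

lemma incidenceSign_mul_taylorIncidence_insert {t : Fin k} {S : Finset (Fin k)} (ht : t ∉ S) :
    incidenceSign R p (S.map p.succAboveEmb) *
        taylorIncidence g R (p.succAbove t) (insert p (S.map p.succAboveEmb)) =
      -(taylorIncidence (colonGens (p.removeNth g) (g p)) R t S *
        incidenceSign R p ((insert t S).map p.succAboveEmb)) := by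
  have hsign : incidenceSign R (p.succAbove t) (S.map p.succAboveEmb) = incidenceSign R t S :=
    incidenceSign_map p.succAboveOrderEmb t S
  have hlcm : taylorLcm g (insert p (S.map p.succAboveEmb)) =
        taylorLcm g (insert (p.succAbove t) (insert p (S.map p.succAboveEmb))) ↔
      taylorLcm (colonGens (p.removeNth g) (g p)) S =
        taylorLcm (colonGens (p.removeNth g) (g p)) (insert t S) := by
    rw [Finset.insert_comm, ← map_succAboveEmb_insert, taylorLcm_insert_map_succAboveEmb,
      taylorLcm_insert_map_succAboveEmb, add_left_inj]
  unfold taylorIncidence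
  by_cases h : taylorLcm (colonGens (p.removeNth g) (g p)) S =
      taylorLcm (colonGens (p.removeNth g) (g p)) (insert t S)
  · rw [if_pos (hlcm.mpr h), if_pos h, incidenceSign_mul_insert_swap (by simpa using ht)
      (notMem_map_succAboveEmb p S) (p.succAbove_ne t), map_succAboveEmb_insert, hsign]
  · rw [if_neg (mt hlcm.mp h), if_neg h, mul_zero, zero_mul, neg_zero]

lemma chainLink_taylorDiff (u : Finset (Fin (k + 1)) →₀ K) :
    chainLink K p (taylorDiff g u) =
      -taylorDiff (colonGens (p.removeNth g) (g p)) (chainLink K p u) := by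
  ext S
  rw [chainLink_apply, taylorDiff_apply, compl_insert_map_succAboveEmb, Finset.sum_map,
    Finsupp.neg_apply, taylorDiff_apply, Finset.mul_sum, ← Finset.sum_neg_distrib]
  refine Finset.sum_congr rfl fun t ht => ?_
  rw [chainLink_apply, ← mul_assoc, Fin.coe_succAboveEmb,
    incidenceSign_mul_taylorIncidence_insert p g (Finset.mem_compl.mp ht), Finset.insert_comm,
    ← map_succAboveEmb_insert, neg_mul, mul_assoc]

lemma chainDeletion_taylorDiff_apply (u : Finset (Fin (k + 1)) →₀ K) (S : Finset (Fin k)) :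
    chainDeletion K p (taylorDiff g u) S =
      taylorIncidence g K p (S.map p.succAboveEmb) * u (insert p (S.map p.succAboveEmb)) +
        taylorDiff (p.removeNth g) (chainDeletion K p u) S := by
  rw [chainDeletion_apply, taylorDiff_apply, compl_map_succAboveEmb,
    Finset.sum_insert (notMem_map_succAboveEmb p _), Finset.sum_map, taylorDiff_apply]
  simp only [Fin.coe_succAboveEmb, taylorIncidence_map_succAboveEmb, chainDeletion_apply,
    map_succAboveEmb_insert]

lemma chainDeletion_taylorDiff_of_chainLink_eq_zero {u : Finset (Fin (k + 1)) →₀ K}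
    (hu : chainLink K p u = 0) :
    chainDeletion K p (taylorDiff g u) = taylorDiff (p.removeNth g) (chainDeletion K p u) := by
  ext S
  have hS : u (insert p (S.map p.succAboveEmb)) = 0 := by
    simpa [chainLink_apply, incidenceSign_ne_zero] using DFunLike.congr_fun hu S
  rw [chainDeletion_taylorDiff_apply, hS, mul_zero, zero_add]

lemma chainDeletion_taylorDiff_of_eq_zero (hg : g p = 0) (u : Finset (Fin (k + 1)) →₀ K) :
    chainDeletion K p (taylorDiff g u) =
      chainLink K p u + taylorDiff (p.removeNth g) (chainDeletion K p u) := by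
  ext S
  have hlcm : taylorLcm g (S.map p.succAboveEmb) =
      taylorLcm g (insert p (S.map p.succAboveEmb)) := by
    rw [taylorLcm_insert, hg, ← bot_eq_zero, bot_sup_eq]
  rw [chainDeletion_taylorDiff_apply, taylorIncidence, if_pos hlcm, Finsupp.add_apply,
    chainLink_apply]

end DeletionLink

section LongExactSequence

variable {V K : Type*} [Field K] {k : ℕ} (p : Fin (k + 1)) {g : Fin (k + 1) → (V →₀ ℕ)} {i j : ℕ}

lemma monomialDegree_add (a b : V →₀ ℕ) :
    monomialDegree (a + b) = monomialDegree a + monomialDegree b :=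
  map_add (Finsupp.degree (R := ℕ)) a b

lemma monomialDegree_mono : Monotone (monomialDegree (V := V)) :=
  Finsupp.degree_mono

lemma mem_taylorPiece_iff_chainDeletion_chainLink {u : Finset (Fin (k + 1)) →₀ K} :
    u ∈ taylorPiece g i j ↔ chainDeletion K p u ∈ taylorPiece (p.removeNth g) i j ∧
      ∀ S, chainLink K p u S ≠ 0 → S.card + 1 = i ∧
        monomialDegree (taylorLcm (colonGens (p.removeNth g) (g p)) S) +
          monomialDegree (g p) = j := by
  rw [mem_taylorPiece_iff, mem_taylorPiece_iff, forall_finset_fin_succ_iff p]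
  simp [chainDeletion_apply, chainLink_apply, incidenceSign_ne_zero, taylorLcm_map_succAboveEmb,
    taylorLcm_insert_map_succAboveEmb, monomialDegree_add,
    Finset.card_insert_of_notMem (notMem_map_succAboveEmb p _)]

lemma mem_taylorPiece_iff_chainDeletion {u : Finset (Fin (k + 1)) →₀ K}
    (hu : chainLink K p u = 0) :
    u ∈ taylorPiece g i j ↔ chainDeletion K p u ∈ taylorPiece (p.removeNth g) i j := by
  simp [mem_taylorPiece_iff_chainDeletion_chainLink p, hu]

lemma exists_chainLink_taylorDiff_eq
    (hcol : ∀ j', j' + monomialDegree (g p) = j →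
      ¬ taylorHomologyNonzero (K := K) (colonGens (p.removeNth g) (g p)) i j')
    {u : Finset (Fin (k + 1)) →₀ K} (hu : u ∈ taylorPiece g (i + 1) j)
    (hcycle : chainLink K p (taylorDiff g u) = 0) :
    ∃ w ∈ taylorPiece (K := K) g (i + 2) j, chainLink K p (taylorDiff g w) = chainLink K p u := by
  have hlink := (mem_taylorPiece_iff_chainDeletion_chainLink p).mp hu |>.2
  rw [chainLink_taylorDiff, neg_eq_zero] at hcycle
  by_cases hj : monomialDegree (g p) ≤ j
  · obtain ⟨j', rfl⟩ := Nat.exists_eq_add_of_le' hj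
    have hpiece : chainLink K p u ∈ taylorPiece (colonGens (p.removeNth g) (g p)) i j' := by
      simpa [mem_taylorPiece_iff] using hlink
    obtain ⟨b, hb, hbu⟩ := (not_taylorHomologyNonzero_iff _).mp (hcol j' rfl) _ hpiece hcycle
    obtain ⟨w, hwdel, hwlink⟩ := exists_chainDeletion_eq_chainLink_eq p 0 (-b)
    refine ⟨w, ?_, by rw [chainLink_taylorDiff, hwlink, map_neg, neg_neg, hbu]⟩
    rw [mem_taylorPiece_iff] at hb
    simpa [mem_taylorPiece_iff_chainDeletion_chainLink p, hwdel, hwlink] using hb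
  · have hzero : chainLink K p u = 0 := by
      ext S
      by_contra hS
      have := (hlink S hS).2
      omega
    exact ⟨0, zero_mem _, by simp [hzero]⟩

lemma taylorHomologyNonzero_of_removeNth
    (h : taylorHomologyNonzero (K := K) (p.removeNth g) i j) :
    taylorHomologyNonzero (K := K) g i j ∨ ∃ j', j' + monomialDegree (g p) = j ∧
      taylorHomologyNonzero (K := K) (colonGens (p.removeNth g) (g p)) i j' := by
  contrapose! h
  obtain ⟨hg, hcol⟩ := h
  rw [not_taylorHomologyNonzero_iff] at hg ⊢
  intro f hf hdf
  obtain ⟨v, hvdel, hvlink⟩ := exists_chainDeletion_eq_chainLink_eq p f 0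
  have hv : v ∈ taylorPiece g i j := by
    rwa [mem_taylorPiece_iff_chainDeletion p hvlink, hvdel]
  have hdv : taylorDiff g v = 0 := chain_ext p
    (by rw [chainDeletion_taylorDiff_of_chainLink_eq_zero p g hvlink, hvdel, hdf, map_zero])
    (by rw [chainLink_taylorDiff, hvlink, map_zero, map_zero, neg_zero])
  obtain ⟨u, hu, hdu⟩ := hg v hv hdv
  obtain ⟨w, hw, hwu⟩ := exists_chainLink_taylorDiff_eq p hcol hu (by rw [hdu, hvlink])
  have hlink : chainLink K p (u - taylorDiff g w) = 0 := by rw [map_sub, hwu, sub_self]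
  refine ⟨chainDeletion K p (u - taylorDiff g w), ?_, ?_⟩
  · exact (mem_taylorPiece_iff_chainDeletion p hlink).mp
      (sub_mem hu (taylorDiff_mem_taylorPiece g hw))
  · rw [← chainDeletion_taylorDiff_of_chainLink_eq_zero p g hlink, map_sub, taylorDiff_taylorDiff,
      sub_zero, hdu, hvdel]

lemma taylorHomologyNonzero_removeNth_or_colonGens
    (h : taylorHomologyNonzero (K := K) g (i + 1) j) :
    taylorHomologyNonzero (K := K) (p.removeNth g) (i + 1) j ∨
      ∃ j', j' + monomialDegree (g p) = j ∧
        taylorHomologyNonzero (K := K) (colonGens (p.removeNth g) (g p)) i j' := by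
  contrapose! h
  obtain ⟨hdel, hcol⟩ := h
  rw [not_taylorHomologyNonzero_iff] at hdel ⊢
  intro u hu hdu
  obtain ⟨w, hw, hwu⟩ := exists_chainLink_taylorDiff_eq p hcol hu (by rw [hdu, map_zero])
  have hlink : chainLink K p (u - taylorDiff g w) = 0 := by rw [map_sub, hwu, sub_self]
  have hpiece := (mem_taylorPiece_iff_chainDeletion p hlink).mp
    (sub_mem hu (taylorDiff_mem_taylorPiece g hw))
  obtain ⟨a, ha, hda⟩ := hdel _ hpiece <| by
    rw [← chainDeletion_taylorDiff_of_chainLink_eq_zero p g hlink, map_sub, taylorDiff_taylorDiff,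
      sub_zero, hdu, map_zero]
  obtain ⟨c, hcdel, hclink⟩ := exists_chainDeletion_eq_chainLink_eq p a 0
  have hdc : taylorDiff g c = u - taylorDiff g w := chain_ext p
    (by rw [chainDeletion_taylorDiff_of_chainLink_eq_zero p g hclink, hcdel, hda])
    (by rw [chainLink_taylorDiff, hclink, map_zero, neg_zero, hlink])
  refine ⟨c + w, add_mem ?_ hw, by rw [map_add, hdc, sub_add_cancel]⟩
  rwa [mem_taylorPiece_iff_chainDeletion p hclink, hcdel]

-- Coning with `p` is a contracting homotopy.
lemma not_taylorHomologyNonzero_of_eq_zero (hg : g p = 0) :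
    ¬ taylorHomologyNonzero (K := K) g i j := by
  rw [not_taylorHomologyNonzero_iff]
  intro u hu hdu
  have hcol : colonGens (p.removeNth g) (g p) = p.removeNth g :=
    funext fun t => by rw [colonGens, hg, tsub_zero]
  have hdeg : monomialDegree (g p) = 0 := by rw [hg, monomialDegree, Finsupp.sum_zero_index]
  have hlink : chainLink K p u + taylorDiff (p.removeNth g) (chainDeletion K p u) = 0 := by
    rw [← chainDeletion_taylorDiff_of_eq_zero p g hg, hdu, map_zero]
  obtain ⟨w, hwdel, hwlink⟩ := exists_chainDeletion_eq_chainLink_eq p 0 (chainDeletion K p u)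
  refine ⟨w, ?_, chain_ext p ?_ ?_⟩
  · have hdel := ((mem_taylorPiece_iff_chainDeletion_chainLink p).mp hu).1
    rw [mem_taylorPiece_iff] at hdel
    simpa [mem_taylorPiece_iff_chainDeletion_chainLink p, hwdel, hwlink, hcol, hdeg] using hdel
  · rw [chainDeletion_taylorDiff_of_eq_zero p g hg, hwdel, hwlink, map_zero, add_zero]
  · rw [chainLink_taylorDiff, hcol, hwlink, eq_neg_of_add_eq_zero_left hlink]

end LongExactSequence

section Regularity

variable {V K : Type*} [Field K] {k : ℕ}

lemma exists_card_eq_of_taylorHomologyNonzero {g : Fin k → (V →₀ ℕ)} {i j : ℕ}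
    (h : taylorHomologyNonzero (K := K) g i j) :
    ∃ T : Finset (Fin k), T.card = i ∧ monomialDegree (taylorLcm g T) = j := by
  contrapose! h
  refine (not_taylorHomologyNonzero_iff g).mpr fun f hf _ => ⟨0, zero_mem _, ?_⟩
  ext T
  by_contra hT
  obtain ⟨hcard, hdeg⟩ := (mem_taylorPiece_iff g).mp hf T fun h0 => hT (by simp [h0])
  exact h T hcard hdeg

-- A redundant generator `g p` can be deleted without losing homology: the colon ideal by it is the
-- unit ideal, so the link of `p` is acyclic.
lemma le_monomialDegree_of_taylorHomologyNonzero {g : Fin k → (V →₀ ℕ)} {M : V →₀ ℕ} {i j : ℕ}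
    (hM : ∀ t, ∃ s, g s ≤ g t ∧ g s ≤ M) (h : taylorHomologyNonzero (K := K) g (i + 1) j) :
    j ≤ monomialDegree M := by
  induction k with
  | zero =>
    obtain ⟨T, -, rfl⟩ := exists_card_eq_of_taylorHomologyNonzero h
    exact monomialDegree_mono (Finset.sup_le fun t => t.elim0)
  | succ k ih =>
    by_cases hle : ∀ t, g t ≤ M
    · obtain ⟨T, -, rfl⟩ := exists_card_eq_of_taylorHomologyNonzero h
      exact monomialDegree_mono (Finset.sup_le fun t _ => hle t)
    obtain ⟨p, hp⟩ := not_forall.mp hle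
    have hM' (t : Fin (k + 1)) : ∃ s, p.removeNth g s ≤ g t ∧ p.removeNth g s ≤ M := by
      obtain ⟨s, hst, hsM⟩ := hM t
      obtain ⟨s, rfl⟩ := Fin.exists_succAbove_eq (x := s) (y := p) (by rintro rfl; exact hp hsM)
      exact ⟨s, hst, hsM⟩
    rcases taylorHomologyNonzero_removeNth_or_colonGens p h with h | ⟨j', -, h⟩
    · exact ih (fun t => hM' _) h
    · obtain ⟨s, hsp, -⟩ := hM' p
      cases k with
      | zero => exact s.elim0
      | succ k => exact absurd h (not_taylorHomologyNonzero_of_eq_zero s (tsub_eq_zero_of_le hsp))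

/-- The monomial ideal generated by the monomials with exponent vectors in `S`; unlike
`monomialSpan` it does not fix an enumeration of the generators. -/
noncomputable def monomialIdeal (R : Type*) [CommRing R] (S : Set (V →₀ ℕ)) :
    Ideal (MvPolynomial V R) :=
  Ideal.span ((fun s => monomial s (1 : R)) '' S)

section CommRing

variable {R : Type*} [CommRing R]

lemma monomialSpan_eq_monomialIdeal (g : Fin k → (V →₀ ℕ)) :
    monomialSpan g = monomialIdeal R (Set.range g) := by
  rw [monomialSpan, monomialIdeal, ← Set.range_comp]
  rfl

lemma monomialIdeal_singleton (n : V →₀ ℕ) :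
    monomialIdeal R {n} = Ideal.span {monomial n (1 : R)} := by
  rw [monomialIdeal, Set.image_singleton]

lemma monomialIdeal_union (S T : Set (V →₀ ℕ)) :
    monomialIdeal R (S ∪ T) = monomialIdeal R S ⊔ monomialIdeal R T := by
  rw [monomialIdeal, Set.image_union, Ideal.span_union, monomialIdeal, monomialIdeal]

lemma monomialIdeal_iUnion {ι : Sort*} (S : ι → Set (V →₀ ℕ)) :
    monomialIdeal R (⋃ i, S i) = ⨆ i, monomialIdeal R (S i) := by
  simp only [monomialIdeal, Set.image_iUnion, Ideal.span_iUnion]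

lemma colon_monomialIdeal_span_singleton (S : Set (V →₀ ℕ)) (n : V →₀ ℕ) :
    (monomialIdeal R S).colon (Ideal.span {monomial n (1 : R)}) =
      monomialIdeal R ((fun s => s - n) '' S) := by
  ext f
  rw [Ideal.mem_colon_span_singleton, monomialIdeal, monomialIdeal, mem_ideal_span_monomial_image,
    mem_ideal_span_monomial_image]
  simp only [mem_support_iff, Set.exists_mem_image, tsub_le_iff_right]
  refine ⟨fun h a ha => h (a + n) (by rwa [coeff_mul_monomial, mul_one]), fun h a ha => ?_⟩
  rw [coeff_mul_monomial'] at ha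
  split_ifs at ha with hna
  · simpa only [tsub_add_cancel_of_le hna] using h (a - n) (by rwa [mul_one] at ha)
  · exact absurd rfl ha

lemma colon_monomialSpan (g : Fin k → (V →₀ ℕ)) (n : V →₀ ℕ) :
    (monomialSpan (K := R) g).colon (Ideal.span {monomial n (1 : R)}) =
      monomialSpan (colonGens g n) := by
  rw [monomialSpan_eq_monomialIdeal, monomialSpan_eq_monomialIdeal,
    colon_monomialIdeal_span_singleton, ← Set.range_comp]
  rfl

lemma colon_monomialSpan_sup_monomialIdeal_image {ι : Type*} (g : Fin k → (V →₀ ℕ))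
    (m : ι → (V →₀ ℕ)) (A : Set ι) (n : V →₀ ℕ) :
    (monomialSpan g ⊔ monomialIdeal R (m '' A)).colon
        (Ideal.span {monomial n (1 : R)}) =
      (monomialSpan (K := R) g).colon (Ideal.span {monomial n (1 : R)}) ⊔
        ⨆ l ∈ A, (Ideal.span {(monomial (m l) (1 : R) : MvPolynomial V R)}).colon
          (Ideal.span {monomial n (1 : R)}) := by
  simp only [← monomialIdeal_singleton (m _)]
  rw [monomialSpan_eq_monomialIdeal, ← monomialIdeal_union, Set.image_eq_iUnion m,
    colon_monomialIdeal_span_singleton]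
  simp only [colon_monomialIdeal_span_singleton, Set.image_union, Set.image_iUnion,
    monomialIdeal_union, monomialIdeal_iUnion]

lemma monomial_mem_monomialSpan_iff [Nontrivial R] {g : Fin k → (V →₀ ℕ)} {a : V →₀ ℕ} :
    monomial a (1 : R) ∈ monomialSpan g ↔ ∃ t, g t ≤ a := by
  classical
  rw [monomialSpan_eq_monomialIdeal, monomialIdeal, mem_ideal_span_monomial_image]
  simp [support_monomial]

end CommRing

lemma sub_le_reg {I : Ideal (MvPolynomial V K)} {i j : ℕ} (h : IdealTorNonzero I i j) :
    j - i ≤ reg I := by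
  obtain ⟨k, m, rfl, -⟩ := id h
  refine le_csSup ⟨monomialDegree (Finset.univ.sup m), ?_⟩ ⟨i, j, h, rfl⟩
  rintro _ ⟨i, j, ⟨k', g, hg, hne⟩, rfl⟩
  refine (Nat.sub_le j i).trans (le_monomialDegree_of_taylorHomologyNonzero (fun t => ?_) hne)
  obtain ⟨r, hrt⟩ : ∃ r, m r ≤ g t := by
    rw [← monomial_mem_monomialSpan_iff (R := K), hg, monomial_mem_monomialSpan_iff]
    exact ⟨t, le_rfl⟩
  obtain ⟨s, hsr⟩ : ∃ s, g s ≤ m r := by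
    rw [← monomial_mem_monomialSpan_iff (R := K), ← hg, monomial_mem_monomialSpan_iff]
    exact ⟨r, le_rfl⟩
  exact ⟨s, hsr.trans hrt, hsr.trans (Finset.le_sup (Finset.mem_univ r))⟩

lemma reg_le_max_reg_colon_add_reg_sup (I : Ideal (MvPolynomial V K)) (n : V →₀ ℕ) :
    reg I ≤
      max (reg (I.colon (Ideal.span {monomial n (1 : K)})) +
          monomialDegree n)
        (reg (I ⊔ Ideal.span {monomial n (1 : K)})) := by
  refine csSup_le' ?_
  rintro _ ⟨i, j, ⟨k, g, rfl, h⟩, rfl⟩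
  rcases taylorHomologyNonzero_of_removeNth (g := Fin.cons n g) 0
    (by rwa [Fin.removeNth_zero, Fin.tail_cons]) with h | ⟨j', hj, h⟩
  · refine le_max_of_le_right (sub_le_reg ⟨_, _, ?_, h⟩)
    rw [monomialSpan_eq_monomialIdeal, monomialSpan_eq_monomialIdeal, Fin.range_cons,
      Set.insert_eq, Set.union_comm, monomialIdeal_union, monomialIdeal_singleton]
  · rw [Fin.removeNth_zero, Fin.tail_cons, Fin.cons_zero] at h
    have hreg := sub_le_reg ⟨_, _, colon_monomialSpan g n, h⟩
    rw [Fin.cons_zero] at hj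
    omega

lemma le_iSup_sup_of_forall_le_sup {α : Type*} [ConditionallyCompleteLattice α]
    {a : Fin (k + 1) → α} {b : Fin k → α} (h : ∀ i, a i.castSucc ≤ b i ⊔ a i.succ) :
    a 0 ≤ (⨆ i, b i) ⊔ a (Fin.last k) := by
  suffices ∀ r, a 0 ≤ (⨆ i, b i) ⊔ a r from this _
  intro r
  induction r using Fin.induction with
  | zero => exact le_sup_right
  | succ r ih =>
    exact ih.trans (sup_le le_sup_left ((h r).trans
      (sup_le_sup_right (le_ciSup (Set.finite_range b).bddAbove r) _)))

theorem stmt15_general (m : Fin k → (V →₀ ℕ)) (J : Ideal (MvPolynomial V K))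
    (hJ : ∃ (k' : ℕ) (gens : Fin k' → (V →₀ ℕ)), J = monomialSpan gens) :
    reg J ≤ max
      (⨆ i : Fin k, (reg (Submodule.colon J (Ideal.span {monomial (m i) (1 : K)}) ⊔
          ⨆ l : Fin k, ⨆ _ : (l : ℕ) < (i : ℕ),
            Submodule.colon (Ideal.span {(monomial (m l) (1 : K) : MvPolynomial V K)})
              (Ideal.span {monomial (m i) (1 : K)})) + monomialDegree (m i)))
      (reg (J ⊔ monomialSpan m)) := by
  obtain ⟨k', g, rfl⟩ := hJ
  let L (r : Fin (k + 1)) : Ideal (MvPolynomial V K) :=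
    monomialSpan g ⊔ monomialIdeal K (m '' {l | l.castSucc < r})
  have hzero : L 0 = monomialSpan g := by simp [L, monomialIdeal]
  have hlast : L (Fin.last k) = monomialSpan g ⊔ monomialSpan m := by
    simp [L, monomialSpan_eq_monomialIdeal, Fin.castSucc_lt_last]
  have hsucc (i : Fin k) : L i.succ = L i.castSucc ⊔ Ideal.span {monomial (m i) 1} := by
    have hset : {l : Fin k | l.castSucc < i.succ} = {l | l.castSucc < i.castSucc} ∪ {i} := by
      ext l
      simp [le_iff_lt_or_eq, or_comm]
    simp only [L, hset, Set.image_union, monomialIdeal_union, Set.image_singleton,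
      monomialIdeal_singleton, sup_assoc]
  have hcolon (i : Fin k) : (L i.castSucc).colon (Ideal.span {monomial (m i) (1 : K)}) =
      (monomialSpan (K := K) g).colon (Ideal.span {monomial (m i) (1 : K)}) ⊔
        ⨆ l : Fin k, ⨆ _ : (l : ℕ) < (i : ℕ),
          (Ideal.span {(monomial (m l) (1 : K) : MvPolynomial V K)}).colon
            (Ideal.span {monomial (m i) (1 : K)}) :=
    colon_monomialSpan_sup_monomialIdeal_image g m {l | l.castSucc < i.castSucc} (m i)
  rw [← hlast]
  refine (congrArg reg hzero).ge.trans (le_iSup_sup_of_forall_le_sup (a := reg ∘ L) fun i => ?_)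
  rw [Function.comp_apply, Function.comp_apply, hsucc]
  exact (hcolon i) ▸ reg_le_max_reg_colon_add_reg_sup (L i.castSucc) (m i)

end Regularity

/-- If `J ⊆ I` are monomial ideals with `I` generated in degree `d` by
monomials `m_1, …, m_k`, then
`reg J ≤ max { max_i (reg((J : m_i) + (m_1 : m_i) + ⋯ + (m_{i-1} : m_i)) + d), reg I }`. -/
theorem stmt15 {V K : Type*} [Field K]
    (k d : ℕ) (m : Fin k → (V →₀ ℕ)) (hdeg : ∀ i, monomialDegree (m i) = d)
    (I J : Ideal (MvPolynomial V K)) (hI : I = monomialSpan m)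
    (hJ : ∃ (k' : ℕ) (gens : Fin k' → (V →₀ ℕ)), J = monomialSpan gens)
    (hJI : J ≤ I) :
    reg J ≤ max
      (⨆ i : Fin k, (reg (Submodule.colon J (Ideal.span {monomial (m i) (1 : K)}) ⊔
          ⨆ l : Fin k, ⨆ _ : (l : ℕ) < (i : ℕ),
            Submodule.colon (Ideal.span {(monomial (m l) (1 : K) : MvPolynomial V K)})
              (Ideal.span {monomial (m i) (1 : K)})) + d))
      (reg I) := by
  simpa only [hdeg, ← hI, sup_eq_right.mpr hJI] using stmt15_general m J hJ
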